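/- Every maximal Sidon set in F_2^5 has cardinality 7, and is the image under some affine permutation of the set {0, e_1, e_2, e_3, e_4, e_5, e_1+e_2+e_3+e_4}, where e_1,...,e_5 is the standard basis of F_2^5. -/

import Mathlib

/-- A subset `M` of `𝔽₂ᵗ` is Sidon if `m₁+m₂ ≠ m₃+m₄` for pairwise distinct elements. -/
def IsSidon {t : ℕ} (M : Finset (Fin t → ZMod 2)) : Prop :=
  ∀ m₁ ∈ M, ∀ m₂ ∈ M, ∀ m₃ ∈ M, ∀ m₄ ∈ M,
    (m₁ ≠ m₂ ∧ m₁ ≠ m₃ ∧ m₁ ≠ m₄ ∧ m₂ ≠ m₃ ∧ m₂ ≠ m₄ ∧ m₃ ≠ m₄) →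
    m₁ + m₂ ≠ m₃ + m₄

/-- `M` is sum-free if `m₁+m₂ ≠ m₃` for all `m₁,m₂,m₃ ∈ M`. -/
def IsSumFree {t : ℕ} (M : Finset (Fin t → ZMod 2)) : Prop :=
  ∀ m₁ ∈ M, ∀ m₂ ∈ M, ∀ m₃ ∈ M, m₁ + m₂ ≠ m₃

/-- A maximal Sidon set. -/
def IsMaximalSidon {t : ℕ} (M : Finset (Fin t → ZMod 2)) : Prop :=
  IsSidon M ∧ ∀ S : Finset (Fin t → ZMod 2), IsSidon S → M ⊆ S → S = M

/-- Maximum size of a Sidon set in `𝔽₂ᵗ`. -/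
noncomputable def sMax (t : ℕ) : ℕ :=
  sSup {n : ℕ | ∃ M : Finset (Fin t → ZMod 2), IsSidon M ∧ M.card = n}

/-- 2-sums of `M`. -/
def twoSums {t : ℕ} (M : Finset (Fin t → ZMod 2)) : Finset (Fin t → ZMod 2) :=
  (M ×ˢ M).image fun p => p.1 + p.2

/-- 2-star-sums of `M` (sums of two distinct elements). -/
def twoStarSums {t : ℕ} (M : Finset (Fin t → ZMod 2)) : Finset (Fin t → ZMod 2) :=
  ((M ×ˢ M).filter fun p => p.1 ≠ p.2).image fun p => p.1 + p.2

/-- 3-sums of `M`. -/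
def threeSums {t : ℕ} (M : Finset (Fin t → ZMod 2)) : Finset (Fin t → ZMod 2) :=
  ((M ×ˢ M) ×ˢ M).image fun p => p.1.1 + p.1.2 + p.2

/-- 3-star-sums of `M` (sums of three pairwise distinct elements). -/
def threeStarSums {t : ℕ} (M : Finset (Fin t → ZMod 2)) : Finset (Fin t → ZMod 2) :=
  (((M ×ˢ M) ×ˢ M).filter fun p => p.1.1 ≠ p.1.2 ∧ p.1.1 ≠ p.2 ∧ p.1.2 ≠ p.2).image
    fun p => p.1.1 + p.1.2 + p.2

/-- 4-sums of `M`. -/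
def fourSums {t : ℕ} (M : Finset (Fin t → ZMod 2)) : Finset (Fin t → ZMod 2) :=
  (((M ×ˢ M) ×ˢ M) ×ˢ M).image fun p => p.1.1.1 + p.1.1.2 + p.1.2 + p.2

/-- The standard basis vectors of `𝔽₂ᵗ`. -/
def stdBasis {t : ℕ} (i : Fin t) : Fin t → ZMod 2 := Pi.single i 1

/-!
Adding a point that is not a sum of three elements of a Sidon set keeps it Sidon, so every vector is
a sum of three elements of a maximal Sidon set `M`. Such sums lie in the affine span of `M`, hence
`M ⊆ 𝔽₂⁵` contains an affine basis `b` of six points.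

Over `𝔽₂` every vector is the sum of `b` over an index set of odd size. For a point of `M` outside
the basis, sizes `1` and `3` are impossible, so exactly one basis point is omitted: the point is
`σ + b i`, where `σ` is the sum of all of `b`. Two such points would satisfy
`x + b i = σ = y + b j`, so there is at most one. There is at least one, because a sum of five basis
points has five nonzero barycentric coordinates and is thus not a sum of three basis points.
Ordering `b` so that its last point is the omitted one determines `M` up to an affine permutation.
-/

open Finset

section ZModModule

variable {ι V W : Type*} [AddCommGroup V] [Module (ZMod 2) V] [AddCommGroup W] [Module (ZMod 2) W]

lemma add_eq_iff_eq_add {x y z : V} : x + y = z ↔ x = y + z := by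
  rw [← ZModModule.sub_eq_add, sub_eq_iff_eq_add']

lemma add_add_mem_affineSubspace (s : AffineSubspace (ZMod 2) V) {x y z : V}
    (hx : x ∈ s) (hy : y ∈ s) (hz : z ∈ s) : x + y + z ∈ s := by
  simpa [ZModModule.sub_eq_add] using s.smul_vsub_vadd_mem 1 hx hy hz

lemma affineMap_sum_of_odd_card (f : V →ᵃ[ZMod 2] W) {S : Finset ι} (hS : Odd #S) (p : ι → V) :
    f (∑ i ∈ S, p i) = ∑ i ∈ S, f (p i) := by
  have hw : ∑ _i ∈ S, (1 : ZMod 2) = 1 := by simpa using hS.natCast_zmod_two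
  simpa [affineCombination_eq_linear_combination _ _ _ hw] using S.map_affineCombination p _ hw f

lemma affineMap_add_add (f : V →ᵃ[ZMod 2] W) (x y z : V) :
    f (x + y + z) = f x + f y + f z := by
  simpa [Fin.sum_univ_three] using
    affineMap_sum_of_odd_card f (S := univ) (by decide) ![x, y, z]

lemma exists_odd_card_sum_eq [Finite ι] (b : AffineBasis ι (ZMod 2) V) (x : V) :
    ∃ S : Finset ι, Odd #S ∧ ∑ i ∈ S, b i = x := by
  cases nonempty_fintype ι
  have ite_eq_self (c : ZMod 2) : (if c = 1 then 1 else 0) = c := by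
    revert c
    decide
  refine ⟨({i | b.coord i x = 1} : Finset ι), ?_, ?_⟩
  · rw [← ZMod.natCast_eq_one_iff_odd, ← sum_boole]
    simp only [ite_eq_self, b.sum_coord_apply_eq_one]
  · calc
      _ = ∑ i, (if b.coord i x = 1 then 1 else 0 : ZMod 2) • b i := by
        simp only [sum_filter, ite_smul, one_smul, zero_smul]
      _ = ∑ i, b.coord i x • b i := by simp only [ite_eq_self]
      _ = x := b.linear_combination_coord_eq_self x

end ZModModule

variable {t : ℕ} {M : Finset (Fin t → ZMod 2)}

lemma mem_threeSums {p : Fin t → ZMod 2} :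
    p ∈ threeSums M ↔ ∃ x ∈ M, ∃ y ∈ M, ∃ z ∈ M, x + y + z = p := by
  simp only [threeSums, mem_image, mem_product, Prod.exists]
  grind

lemma IsSidon.add_add_notMem (hM : IsSidon M) {x y z : Fin t → ZMod 2} (hx : x ∈ M) (hy : y ∈ M)
    (hz : z ∈ M) (hxy : x ≠ y) (hxz : x ≠ z) (hyz : y ≠ z) : x + y + z ∉ M := by
  intro hw
  have add_ne_left {a b c : Fin t → ZMod 2} (h : b ≠ c) : a ≠ a + b + c := by
    rw [ne_eq, add_assoc, left_eq_add, ← ZModModule.sub_eq_add, sub_eq_zero]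
    exact h
  refine hM x hx y hy z hz _ hw ⟨hxy, hxz, add_ne_left hyz, hyz, ?_, ?_⟩ (add_eq_iff_eq_add.1 rfl)
  · rw [add_comm x y]
    exact add_ne_left hxz
  · rw [add_comm, ← add_assoc]
    exact add_ne_left hxy

lemma IsSidon.five_le_card_of_sum_mem {ι : Type*} {p : ι → Fin t → ZMod 2} {S : Finset ι}
    (hM : IsSidon M) (hp : p.Injective) (hpM : ∀ i, p i ∈ M) (hS : Odd #S)
    (hSM : ∑ i ∈ S, p i ∈ M) (hSp : ∑ i ∈ S, p i ∉ Set.range p) : 5 ≤ #S := by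
  classical
  have card_ne_one : #S ≠ 1 := by
    intro h
    obtain ⟨i, rfl⟩ := card_eq_one.1 h
    exact hSp ⟨i, (sum_singleton p i).symm⟩
  have card_ne_three : #S ≠ 3 := by
    intro h
    obtain ⟨i, j, k, hij, hik, hjk, rfl⟩ := card_eq_three.1 h
    rw [sum_insert (by simp [hij, hik]), sum_pair hjk, ← add_assoc] at hSM
    exact hM.add_add_notMem (hpM i) (hpM j) (hpM k) (hp.ne hij) (hp.ne hik) (hp.ne hjk) hSM
  obtain ⟨k, hk⟩ := hS
  omega

lemma IsSidon.insert (hM : IsSidon M) {p : Fin t → ZMod 2} (hp : p ∉ threeSums M) :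
    IsSidon (insert p M) := by
  have hp' {x y z : Fin t → ZMod 2} (hx : x ∈ M) (hy : y ∈ M) (hz : z ∈ M) : x + y + z ≠ p :=
    fun h => hp (mem_threeSums.2 ⟨x, hx, y, hy, z, hz, h⟩)
  intro a ha b hb c hc d hd ⟨hab, hac, had, hbc, hbd, hcd⟩ h
  have hbcd : c + d + b = a := add_eq_iff_eq_add.2 (h.symm.trans (add_comm a b))
  have hacd : c + d + a = b := add_eq_iff_eq_add.2 h.symm
  have habd : a + b + d = c := add_eq_iff_eq_add.2 (h.trans (add_comm c d))
  have habc : a + b + c = d := add_eq_iff_eq_add.2 h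
  grind [IsSidon]

lemma IsMaximalSidon.threeSums_eq_univ (hM : IsMaximalSidon M) : threeSums M = univ := by
  refine eq_univ_of_forall fun p => by_contra fun hp => hp ?_
  have hpM : p ∈ M := hM.2 _ (hM.1.insert hp) (subset_insert p M) ▸ mem_insert_self p M
  exact mem_threeSums.2 ⟨p, hpM, p, hpM, p, hpM, by rw [ZModModule.add_self, zero_add]⟩

lemma affineSpan_eq_top_of_threeSums_eq_univ (hM : threeSums M = univ) :
    affineSpan (ZMod 2) (M : Set (Fin t → ZMod 2)) = ⊤ := by
  refine eq_top_iff.2 fun p _ => ?_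
  obtain ⟨x, hx, y, hy, z, hz, rfl⟩ := mem_threeSums.1 (hM ▸ mem_univ p)
  exact add_add_mem_affineSubspace _ (mem_affineSpan _ hx) (mem_affineSpan _ hy)
    (mem_affineSpan _ hz)

lemma IsMaximalSidon.exists_affineBasis (hM : IsMaximalSidon M) :
    ∃ b : AffineBasis (Fin (t + 1)) (ZMod 2) (Fin t → ZMod 2), ∀ i, b i ∈ M := by
  obtain ⟨s, hsM, b, hb⟩ := AffineBasis.exists_affine_subbasis
    (affineSpan_eq_top_of_threeSums_eq_univ hM.threeSums_eq_univ)
  have : Fintype s := Fintype.ofFinite s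
  have card_s : Fintype.card s = t + 1 := by
    rw [b.card_eq_finrank_add_one, Module.finrank_fin_fun]
  refine ⟨b.reindex (Fintype.equivFinOfCardEq card_s), fun i => ?_⟩
  rw [AffineBasis.reindex_apply, hb]
  exact hsM (Subtype.coe_prop _)

section AffineBasis

variable {ι : Type*} [Fintype ι] {b : AffineBasis ι (ZMod 2) (Fin t → ZMod 2)}
  {x y : Fin t → ZMod 2}

lemma exists_notMem_range_of_threeSums_eq_univ (hM : threeSums M = univ)
    (b : AffineBasis ι (ZMod 2) (Fin t → ZMod 2)) (hι : 5 ≤ Fintype.card ι) :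
    ∃ x ∈ M, x ∉ Set.range b := by
  classical
  by_contra! hMb
  obtain ⟨S, -, hS⟩ := exists_subset_card_eq (s := (univ : Finset ι)) hι
  obtain ⟨x, hx, y, hy, z, hz, hxyz⟩ := mem_threeSums.1 (hM ▸ mem_univ (∑ i ∈ S, b i))
  obtain ⟨i, rfl⟩ := hMb x hx
  obtain ⟨j, rfl⟩ := hMb y hy
  obtain ⟨k, rfl⟩ := hMb z hz
  obtain ⟨l, hlS, hl⟩ : ∃ l ∈ S, l ∉ ({i, j, k} : Finset ι) :=
    exists_mem_notMem_of_card_lt_card (card_le_three.trans_lt (by omega))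
  simp only [mem_insert, mem_singleton, not_or] at hl
  have coord_eq_zero : b.coord l (b i + b j + b k) = 0 := by
    simp [affineMap_add_add, b.coord_apply, hl]
  have coord_eq_one : b.coord l (∑ i ∈ S, b i) = 1 := by
    simp [affineMap_sum_of_odd_card (b.coord l) (hS ▸ by decide : Odd #S), b.coord_apply, hlS]
  exact zero_ne_one (coord_eq_zero.symm.trans (hxyz ▸ coord_eq_one))

lemma IsSidon.exists_add_eq_sum (hM : IsSidon M) (hbM : ∀ i, b i ∈ M) (hι : Fintype.card ι = 6)
    (hx : x ∈ M) (hxb : x ∉ Set.range b) : ∃ i, x + b i = ∑ j, b j := by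
  classical
  obtain ⟨S, hS, rfl⟩ := exists_odd_card_sum_eq b x
  have five_le := hM.five_le_card_of_sum_mem b.ind.injective hbM hS hx hxb
  have card_compl_eq_one : #Sᶜ = 1 := by
    have card_le := card_le_univ S
    rw [card_compl]
    obtain ⟨k, hk⟩ := hS
    omega
  obtain ⟨i, hi⟩ := card_eq_one.1 card_compl_eq_one
  exact ⟨i, by rw [← sum_add_sum_compl S b, hi, sum_singleton]⟩

lemma IsSidon.eq_of_notMem_range (hM : IsSidon M) (hbM : ∀ i, b i ∈ M) (hι : Fintype.card ι = 6)
    (hx : x ∈ M) (hxb : x ∉ Set.range b) (hy : y ∈ M) (hyb : y ∉ Set.range b) : x = y := by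
  obtain ⟨i, hi⟩ := hM.exists_add_eq_sum hbM hι hx hxb
  obtain ⟨j, hj⟩ := hM.exists_add_eq_sum hbM hι hy hyb
  have hxy : x + b i = b j + y := by rw [hi, ← hj, add_comm]
  by_contra hne
  have hij : b i ≠ b j := by
    rintro hij
    rw [hij, add_comm] at hxy
    exact hne (add_left_cancel hxy)
  exact hM.add_add_notMem hx (hbM i) (hbM j) (fun h => hxb ⟨i, h.symm⟩) (fun h => hxb ⟨j, h.symm⟩)
    hij (add_eq_iff_eq_add.2 hxy ▸ hy)

lemma IsMaximalSidon.exists_eq_insert_image (hM : IsMaximalSidon M) (hbM : ∀ i, b i ∈ M)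
    (hι : Fintype.card ι = 6) :
    ∃ x, x ∉ univ.image b ∧ (∃ i, x + b i = ∑ j, b j) ∧ M = insert x (univ.image b) := by
  obtain ⟨x, hx, hxb⟩ := exists_notMem_range_of_threeSums_eq_univ hM.threeSums_eq_univ b (by omega)
  refine ⟨x, by simpa using hxb, hM.1.exists_add_eq_sum hbM hι hx hxb,
    subset_antisymm (fun y hy => ?_) (insert_subset hx (image_subset_iff.2 fun i _ => hbM i))⟩
  by_cases hyb : y ∈ Set.range b
  · exact mem_insert_of_mem (by simpa using hyb)
  · exact mem_insert.2 (.inl (hM.1.eq_of_notMem_range hbM hι hy hyb hx hxb))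

end AffineBasis

lemma exists_perm_sum_castSucc_eq {G : Type*} [AddCancelCommMonoid G] {n : ℕ}
    {p : Fin (n + 1) → G} {x : G} {i : Fin (n + 1)} (hi : x + p i = ∑ j, p j) :
    ∃ e : Equiv.Perm (Fin (n + 1)), ∑ j : Fin n, p (e j.castSucc) = x := by
  let e := Equiv.swap i (Fin.last n)
  have sum_perm : ∑ j, p (e j) = x + p i := (Equiv.sum_comp e p).trans hi.symm
  rw [Fin.sum_univ_castSucc, Equiv.swap_apply_right] at sum_perm
  exact ⟨e, add_right_cancel sum_perm⟩

lemma IsMaximalSidon.exists_eq_insert_sum_castSucc {M : Finset (Fin 5 → ZMod 2)}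
    (hM : IsMaximalSidon M) :
    ∃ b : AffineBasis (Fin 6) (ZMod 2) (Fin 5 → ZMod 2),
      ∑ i : Fin 5, b i.castSucc ∉ univ.image b ∧
        M = insert (∑ i : Fin 5, b i.castSucc) (univ.image b) := by
  obtain ⟨b, hbM⟩ := hM.exists_affineBasis
  obtain ⟨x, hxb, ⟨i, hi⟩, hMx⟩ := hM.exists_eq_insert_image hbM (Fintype.card_fin 6)
  obtain ⟨e, rfl⟩ := exists_perm_sum_castSucc_eq hi
  have image_reindex : univ.image (b.reindex e.symm) = univ.image b := by
    rw [b.coe_reindex, ← image_image (s := univ), Equiv.symm_symm, image_univ_equiv e]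
  exact ⟨b.reindex e.symm, image_reindex ▸ hxb, image_reindex ▸ hMx⟩

lemma exists_linearEquiv_stdBasis_add_eq
    (b : AffineBasis (Fin (t + 1)) (ZMod 2) (Fin t → ZMod 2)) :
    ∃ L : (Fin t → ZMod 2) ≃ₗ[ZMod 2] (Fin t → ZMod 2), ∀ i, L (stdBasis i) + b 0 = b i.succ := by
  refine ⟨((b.basisOf 0).reindex (finSuccAboveEquiv 0).symm).equivFun.symm, fun i => ?_⟩
  simp [stdBasis, Module.Basis.equivFun_symm_apply, Pi.single_apply, finSuccAboveEquiv_apply]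

lemma exists_image_eq_insert_sum_castSucc (b : AffineBasis (Fin 6) (ZMod 2) (Fin 5 → ZMod 2)) :
    ∃ (L : (Fin 5 → ZMod 2) ≃ₗ[ZMod 2] (Fin 5 → ZMod 2)) (a : Fin 5 → ZMod 2),
      Finset.image (fun x => L x + a)
        {0, stdBasis 0, stdBasis 1, stdBasis 2, stdBasis 3, stdBasis 4,
          stdBasis 0 + stdBasis 1 + stdBasis 2 + stdBasis 3} =
        insert (∑ i : Fin 5, b i.castSucc) (univ.image b) := by
  obtain ⟨L, hL⟩ := exists_linearEquiv_stdBasis_add_eq b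
  have hL_pair (i j : Fin 5) : L (stdBasis i + stdBasis j) = b i.succ + b j.succ := by
    rw [← hL, ← hL, add_add_add_comm, ZModModule.add_self, add_zero, map_add]
  have hL_sum : L (stdBasis 0 + stdBasis 1 + stdBasis 2 + stdBasis 3) + b 0 =
      ∑ i : Fin 5, b i.castSucc := by
    rw [add_assoc, map_add, hL_pair, hL_pair, add_comm, ← add_assoc, Fin.sum_univ_five,
      ← add_assoc, ← add_assoc]
    rfl
  refine ⟨L, b 0, ?_⟩
  ext x
  simp only [mem_image, mem_insert, mem_singleton, exists_eq_or_imp, exists_eq_left, mem_univ,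
    true_and, map_zero, zero_add, hL, hL_sum, Fin.exists_fin_succ, IsEmpty.exists_iff, or_false]
  tauto

theorem maximal_sidon_dim5 (M : Finset (Fin 5 → ZMod 2)) (hM : IsMaximalSidon M) :
    M.card = 7 ∧
    ∃ (L : (Fin 5 → ZMod 2) ≃ₗ[ZMod 2] (Fin 5 → ZMod 2)) (a : Fin 5 → ZMod 2),
      Finset.image (fun x => L x + a)
        ({0, stdBasis 0, stdBasis 1, stdBasis 2, stdBasis 3, stdBasis 4,
          stdBasis 0 + stdBasis 1 + stdBasis 2 + stdBasis 3} :
            Finset (Fin 5 → ZMod 2)) = M := by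
  obtain ⟨b, hb, rfl⟩ := hM.exists_eq_insert_sum_castSucc
  obtain ⟨L, a, hLa⟩ := exists_image_eq_insert_sum_castSucc b
  refine ⟨?_, L, a, hLa⟩
  rw [card_insert_of_notMem hb, card_image_of_injective univ b.ind.injective, card_fin]
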